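/- For p ∈ [1,∞), a subset F ⊂ L^p(ℝ^d) is totally bounded if and only if: (i) F is bounded; (ii) for every ε > 0 there exists R > 0 with ∫_{|x|>R} |f(x)|^p dx < ε^p for all f ∈ F; and (iii) for every ε > 0 there exists δ > 0 such that ∫_{ℝ^d} |f(x+y) − f(x)|^p dx < ε^p for all f ∈ F and all |y| < δ. -/

import Mathlib

open MeasureTheory

noncomputable section

/-!
The tails `f ↦ ‖f‖_{L^p(|x| > R)}` and the translation moduli `f ↦ ‖f(· + y) - f‖_p` are
Lipschitz in `f`, uniformly in `R` and `y`, and tend to `0` for each fixed `f`; along a finite net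
of a totally bounded set this convergence is uniform.

Conversely, replace `f` by its average `A f` over translations by a small ball. By Minkowski's
integral inequality `‖f - A f‖_p` is at most the translation modulus, and since the uniform
distribution on the ball is dominated by a multiple of Haar measure, the oscillation
`|A f x - A f y|` is controlled by the modulus at `x - y`, uniformly over the family. Sampling
`A f` at a finite net of a large ball thus approximates every `f` in the family by an element of
one finite-dimensional space, and a bounded set with such approximations is totally bounded.
-/

section TotallyBounded

open Filter Topology
open scoped ENNReal NNReal

lemma eventually_forall_lt_of_totallyBounded {ι X : Type*} [PseudoEMetricSpace X] {l : Filter ι}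
    {φ : ι → X → ℝ≥0∞} {C : ℝ≥0∞} (hC : C ≠ ∞) (hφ : ∀ i x y, φ i x ≤ φ i y + C * edist x y)
    (hlim : ∀ x, Tendsto (φ · x) l (𝓝 0)) {s : Set X} (hs : TotallyBounded s)
    {ε : ℝ≥0∞} (hε : 0 < ε) : ∀ᶠ i in l, ∀ x ∈ s, φ i x < ε := by
  have hε2 : ε / 2 ≠ 0 := (ENNReal.half_pos hε.ne').ne'
  obtain ⟨r, hr, hCr⟩ := ENNReal.exists_nnreal_pos_mul_lt hC hε2
  obtain ⟨t, ht, hst⟩ := EMetric.totallyBounded_iff.1 hs r (by exact_mod_cast hr)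
  have hnet : ∀ᶠ i in l, ∀ y ∈ t, φ i y < ε / 2 :=
    ht.eventually_all.2 fun y _ => (hlim y).eventually_lt_const (pos_iff_ne_zero.2 hε2)
  filter_upwards [hnet] with i hi x hx
  obtain ⟨y, hy, hxy⟩ := Set.mem_iUnion₂.1 (hst hx)
  calc φ i x ≤ φ i y + C * edist x y := hφ i x y
    _ < ε / 2 + ε / 2 := by
      refine ENNReal.add_lt_add (hi y hy) (lt_of_le_of_lt ?_ hCr)
      rw [mul_comm]
      gcongr
      exact hxy.le
    _ = ε := ENNReal.add_halves ε

lemma totallyBounded_of_approx_finiteDimensional (𝕜 : Type*) {X : Type*}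
    [NontriviallyNormedField 𝕜] [ProperSpace 𝕜] [NormedAddCommGroup X] [NormedSpace 𝕜 X]
    {s : Set X} (hs : Bornology.IsBounded s)
    (happrox : ∀ ε > 0, ∃ W : Submodule 𝕜 X, FiniteDimensional 𝕜 W ∧
      ∀ x ∈ s, ∃ w ∈ W, dist x w < ε) : TotallyBounded s := by
  refine Metric.totallyBounded_iff.2 fun ε hε => ?_
  obtain ⟨W, _, hW⟩ := happrox (ε / 2) (half_pos hε)
  have := FiniteDimensional.proper 𝕜 W
  obtain ⟨M, hM⟩ := hs.exists_norm_le
  have hball : TotallyBounded ((↑) '' Metric.closedBall (0 : W) (M + ε / 2) : Set X) :=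
    ((isCompact_closedBall _ _).image continuous_subtype_val).totallyBounded
  obtain ⟨t, ht, hnet⟩ := Metric.totallyBounded_iff.1 hball (ε / 2) (half_pos hε)
  refine ⟨t, ht, fun x hx => ?_⟩
  obtain ⟨w, hw, hxw⟩ := hW x hx
  have hw_norm : ‖w‖ ≤ M + ε / 2 := by
    rw [dist_eq_norm'] at hxw
    linarith [hM x hx, norm_sub_norm_le w x]
  obtain ⟨z, hz, hwz⟩ := Set.mem_iUnion₂.1 (hnet ⟨⟨w, hw⟩, mem_closedBall_zero_iff.2 hw_norm, rfl⟩)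
  refine Set.mem_iUnion₂.2 ⟨z, hz, ?_⟩
  rw [Metric.mem_ball] at hwz ⊢
  linarith [dist_triangle x w z]

lemma exists_simpleFunc_dist_lt_of_isCompact {X : Type*} [PseudoMetricSpace X]
    [TopologicalSpace.SeparableSpace X] [Nonempty X] [MeasurableSpace X] [OpensMeasurableSpace X]
    {K : Set X} (hK : IsCompact K) {δ : ℝ} (hδ : 0 < δ) :
    ∃ π : SimpleFunc X X, ∀ x ∈ K, dist (π x) x < δ := by
  obtain ⟨e, he⟩ := TopologicalSpace.exists_dense_seq X
  obtain ⟨t, hKt⟩ := hK.elim_finite_subcover (fun n => Metric.ball (e n) δ)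
    (fun _ => Metric.isOpen_ball) fun x _ => by
      obtain ⟨n, hn⟩ := he.exists_dist_lt x hδ
      exact Set.mem_iUnion.2 ⟨n, hn⟩
  refine ⟨SimpleFunc.nearestPt e (t.sup id), fun x hx => ?_⟩
  obtain ⟨n, hn, hxn⟩ := Set.mem_iUnion₂.1 (hKt hx)
  rw [← edist_lt_ofReal]
  calc edist (SimpleFunc.nearestPt e (t.sup id) x) x ≤ edist (e n) x :=
        SimpleFunc.edist_nearestPt_le e x (Finset.le_sup (f := id) hn)
    _ < ENNReal.ofReal δ := by rwa [edist_lt_ofReal, dist_comm]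

end TotallyBounded

section Lp

open Filter Topology
open scoped ENNReal NNReal

variable {α E : Type*} [MeasurableSpace α] {μ : Measure α} [NormedAddCommGroup E]

lemma integral_rpow_norm_lt_rpow_iff {p ε : ℝ} (hp : 0 < p) (hε : 0 < ε) {f : α → E}
    (hf : MemLp f (ENNReal.ofReal p) μ) :
    (∫ x, ‖f x‖ ^ p ∂μ) < ε ^ p ↔ eLpNorm f (ENNReal.ofReal p) μ < ENNReal.ofReal ε := by
  rw [hf.eLpNorm_eq_integral_rpow_norm (ENNReal.ofReal_ne_zero_iff.2 hp) ENNReal.ofReal_ne_top,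
    ENNReal.toReal_ofReal hp.le, ENNReal.ofReal_lt_ofReal_iff hε]
  exact (Real.rpow_inv_lt_iff_of_pos (integral_nonneg fun x => by positivity) hε.le hp).symm

lemma tendsto_eLpNorm_restrict_norm_gt {G : Type*} [SeminormedAddGroup G] [MeasurableSpace G]
    [OpensMeasurableSpace G] {μ : Measure G} {p : ℝ≥0∞} (hp : p ≠ ∞) {f : G → E}
    (hf : MemLp f p μ) :
    Tendsto (fun R : ℝ => eLpNorm f p (μ.restrict {x | R < ‖x‖})) atTop (𝓝 0) := by
  lift p to ℝ≥0 using hp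
  rcases eq_or_ne p 0 with rfl | hp0
  · simp
  have hmeas (R : ℝ) : MeasurableSet {x : G | R < ‖x‖} :=
    measurableSet_lt measurable_const continuous_norm.measurable
  have hlim : Tendsto (fun R : ℝ => ∫⁻ x, {x | R < ‖x‖}.indicator (fun x => ‖f x‖ₑ ^ (p : ℝ)) x ∂μ)
      atTop (𝓝 (∫⁻ _, 0 ∂μ)) := by
    refine tendsto_lintegral_filter_of_dominated_convergence' (fun x => ‖f x‖ₑ ^ (p : ℝ))
      (.of_forall fun R => (hf.1.enorm.pow_const _).indicator (hmeas R))
      (.of_forall fun R => .of_forall fun x => Set.indicator_le_self _ _ x) ?_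
      (.of_forall fun x => tendsto_const_nhds.congr' ?_)
    · rw [← eLpNorm_nnreal_pow_eq_lintegral hp0]
      exact ENNReal.rpow_ne_top_of_nonneg p.2 hf.2.ne
    · filter_upwards [eventually_ge_atTop ‖x‖] with R hR
      have hx : x ∉ {x : G | R < ‖x‖} := not_lt.2 hR
      exact (Set.indicator_of_notMem hx _).symm
  have hpow := (ENNReal.continuous_rpow_const (y := (p : ℝ)⁻¹)).tendsto _ |>.comp hlim
  have hp_pos : (0 : ℝ) < p := by positivity
  simpa [Function.comp_def, lintegral_indicator (hmeas _), ← eLpNorm_nnreal_pow_eq_lintegral hp0,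
    hp_pos, ENNReal.rpow_rpow_inv, hp0] using hpow

lemma enorm_integral_le_eLpNorm [NormedSpace ℝ E] [IsProbabilityMeasure μ] {p : ℝ≥0∞}
    (hp1 : 1 ≤ p) {f : α → E} (hf : AEStronglyMeasurable f μ) :
    ‖∫ x, f x ∂μ‖ₑ ≤ eLpNorm f p μ :=
  calc ‖∫ x, f x ∂μ‖ₑ ≤ ∫⁻ x, ‖f x‖ₑ ∂μ := enorm_integral_le_lintegral_enorm f
    _ = eLpNorm f 1 μ := eLpNorm_one_eq_lintegral_enorm.symm
    _ ≤ eLpNorm f p μ := eLpNorm_le_eLpNorm_of_exponent_le hp1 hf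

lemma eLpNorm_integral_le_of_forall_eLpNorm_le {β : Type*} [MeasurableSpace β] {ν : Measure β}
    [NormedSpace ℝ E] [SFinite μ] [IsProbabilityMeasure ν] {p : ℝ≥0∞} (hp1 : 1 ≤ p) (hp : p ≠ ∞)
    {F : α → β → E} (hF : AEStronglyMeasurable (Function.uncurry F) (μ.prod ν)) {C : ℝ≥0∞}
    (hC : ∀ᵐ y ∂ν, eLpNorm (F · y) p μ ≤ C) :
    eLpNorm (fun x => ∫ y, F x y ∂ν) p μ ≤ C := by
  lift p to ℝ≥0 using hp
  have hp0 : p ≠ 0 := by rintro rfl; simp at hp1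
  rw [← ENNReal.rpow_le_rpow_iff (z := p) (by positivity)]
  calc eLpNorm (fun x => ∫ y, F x y ∂ν) p μ ^ (p : ℝ)
      = ∫⁻ x, ‖∫ y, F x y ∂ν‖ₑ ^ (p : ℝ) ∂μ := eLpNorm_nnreal_pow_eq_lintegral hp0
    _ ≤ ∫⁻ x, eLpNorm (F x) p ν ^ (p : ℝ) ∂μ := by
      refine lintegral_mono_ae ?_
      filter_upwards [hF.prodMk_left] with x hx
      gcongr
      exact enorm_integral_le_eLpNorm hp1 hx
    _ = ∫⁻ x, ∫⁻ y, ‖F x y‖ₑ ^ (p : ℝ) ∂ν ∂μ := by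
      simp only [eLpNorm_nnreal_pow_eq_lintegral hp0]
    _ = ∫⁻ y, ∫⁻ x, ‖F x y‖ₑ ^ (p : ℝ) ∂μ ∂ν := lintegral_lintegral_swap (hF.enorm.pow_const _)
    _ = ∫⁻ y, eLpNorm (F · y) p μ ^ (p : ℝ) ∂ν := by
      simp only [eLpNorm_nnreal_pow_eq_lintegral hp0]
    _ ≤ ∫⁻ _, C ^ (p : ℝ) ∂ν := by
      refine lintegral_mono_ae ?_
      filter_upwards [hC] with y hy
      gcongr
    _ = C ^ (p : ℝ) := by simp

lemma eLpNorm_sub_indicator_le {p : ℝ≥0∞} (hp1 : 1 ≤ p) {f g : α → E} {K : Set α}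
    (hK : MeasurableSet K) (hf : AEStronglyMeasurable f μ) (hg : AEStronglyMeasurable g μ) :
    eLpNorm (f - K.indicator g) p μ ≤
      eLpNorm f p (μ.restrict Kᶜ) + eLpNorm (f - g) p (μ.restrict K) := by
  have hsplit : f - K.indicator g = Kᶜ.indicator f + K.indicator (f - g) := by
    rw [Set.indicator_sub', ← add_sub_assoc, Set.indicator_compl_add_self]
  rw [hsplit, ← eLpNorm_indicator_eq_eLpNorm_restrict hK.compl,
    ← eLpNorm_indicator_eq_eLpNorm_restrict hK]
  exact eLpNorm_add_le (hf.indicator hK.compl) ((hf.sub hg).indicator hK) hp1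

lemma memLp_indicator_comp_simpleFunc {β : Type*} {p : ℝ≥0∞} (π : SimpleFunc α β) {K : Set α}
    (hK : MeasurableSet K) (hμK : μ K ≠ ∞) (u : β → E) :
    MemLp (K.indicator (u ∘ π)) p μ := by
  have := Fact.mk hμK.lt_top
  exact (memLp_indicator_iff_restrict hK).2 ((π.map u).memLp_of_isFiniteMeasure p _)

lemma exists_finiteDimensional_indicator_comp_mem {β 𝕜 : Type*} [NontriviallyNormedField 𝕜]
    [NormedSpace 𝕜 E] [FiniteDimensional 𝕜 E] (p : ℝ≥0∞) (π : SimpleFunc α β) {K : Set α}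
    (hK : MeasurableSet K) (hμK : μ K ≠ ∞) :
    ∃ W : Submodule 𝕜 (Lp E p μ), FiniteDimensional 𝕜 W ∧
      ∀ u : β → E, (memLp_indicator_comp_simpleFunc π hK hμK u).toLp ∈ W := by
  let π' : SimpleFunc α π.range :=
    { toFun x := ⟨π x, π.mem_range_self x⟩
      measurableSet_fiber' b := by
        convert π.measurableSet_fiber b using 1
        ext x
        simp [Subtype.ext_iff]
      finite_range' := Set.toFinite _ }
  let Φ : (π.range → E) →ₗ[𝕜] Lp E p μ :=
    { toFun c := (memLp_indicator_comp_simpleFunc π' hK hμK c).toLp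
      map_add' c₁ c₂ := by
        rw [← MemLp.toLp_add]
        exact MemLp.toLp_congr _ _ (.of_eq (Set.indicator_add _ _ _))
      map_smul' a c := by
        rw [RingHom.id_apply, ← MemLp.toLp_const_smul]
        exact MemLp.toLp_congr _ _ (.of_eq (Set.indicator_const_smul K a (c ∘ π'))) }
  exact ⟨Φ.range, inferInstance, fun u => ⟨u ∘ (↑), rfl⟩⟩

end Lp

section TranslationMean

open scoped ENNReal NNReal

variable {G E : Type*} [AddCommGroup G] [MeasurableSpace G] [NormedAddCommGroup E]

lemma memLp_comp_add_left_of_le_smul [MeasurableAdd G] {μ ν : Measure G} [μ.IsAddLeftInvariant]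
    {p c : ℝ≥0∞} (hc : c ≠ ∞) (hν : ν ≤ c • μ) {f : G → E} (hf : MemLp f p μ) (x : G) :
    MemLp (fun y => f (x + y)) p ν :=
  (hf.comp_measurePreserving (measurePreserving_add_left μ x)).of_measure_le_smul hc hν

variable [NormedSpace ℝ E]

/-- The average of the translates of `f` under the distribution `ν`; in convolution notation,
`f * ν̌` with `ν̌` the reflection of `ν`. -/
def translationMean (ν : Measure G) (f : G → E) (x : G) : E := ∫ y, f (x + y) ∂ν

variable [MeasurableAdd₂ G] {μ ν : Measure G} [μ.IsAddLeftInvariant] {p c : ℝ≥0∞} {f : G → E}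

lemma stronglyMeasurable_translationMean [SFinite ν] (hf : StronglyMeasurable f) :
    StronglyMeasurable (translationMean ν f) :=
  (hf.comp_measurable measurable_add).integral_prod_right'

variable [IsProbabilityMeasure ν]

lemma enorm_translationMean_sub_le (hp1 : 1 ≤ p) (hp : p ≠ ∞) (hc : c ≠ ∞) (hν : ν ≤ c • μ)
    (hf : MemLp f p μ) (x y : G) :
    ‖translationMean ν f x - translationMean ν f y‖ₑ ≤
      c ^ (1 / p).toReal * eLpNorm (fun z => f (z + (x - y)) - f z) p μ := by
  have hx := memLp_comp_add_left_of_le_smul hc hν hf x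
  have hy := memLp_comp_add_left_of_le_smul hc hν hf y
  have hfm : AEStronglyMeasurable (fun z => f (z + (x - y)) - f z) μ :=
    (hf.1.comp_measurePreserving (measurePreserving_add_right μ _)).sub hf.1
  calc ‖translationMean ν f x - translationMean ν f y‖ₑ
      = ‖∫ z, f (x + z) - f (y + z) ∂ν‖ₑ := by
        rw [integral_sub (hx.integrable hp1) (hy.integrable hp1), translationMean, translationMean]
    _ ≤ eLpNorm (fun z => f (x + z) - f (y + z)) p ν :=
      enorm_integral_le_eLpNorm hp1 (hx.1.sub hy.1)
    _ ≤ eLpNorm (fun z => f (x + z) - f (y + z)) p (c • μ) := eLpNorm_mono_measure _ hν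
    _ = c ^ (1 / p).toReal * eLpNorm (fun z => f (x + z) - f (y + z)) p μ :=
      eLpNorm_smul_measure_of_ne_top hp _ _
    _ = c ^ (1 / p).toReal * eLpNorm (fun z => f (z + (x - y)) - f z) p μ := by
      rw [← eLpNorm_comp_measurePreserving hfm (measurePreserving_add_left μ y)]
      congr! 4 with z
      simp only [Function.comp_apply]
      congr 2
      abel

lemma eLpNorm_sub_translationMean_le [CompleteSpace E] [SFinite μ] (hp1 : 1 ≤ p) (hp : p ≠ ∞)
    (hc : c ≠ ∞) (hν : ν ≤ c • μ) (hfm : StronglyMeasurable f) (hf : MemLp f p μ) {C : ℝ≥0∞}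
    (hC : ∀ᵐ y ∂ν, eLpNorm (fun x => f (x + y) - f x) p μ ≤ C) :
    eLpNorm (f - translationMean ν f) p μ ≤ C := by
  have hmean (x : G) : translationMean ν f x - f x = ∫ y, f (x + y) - f x ∂ν := by
    rw [integral_sub ((memLp_comp_add_left_of_le_smul hc hν hf x).integrable hp1)
      (integrable_const _), translationMean]
    simp
  have hjoint : StronglyMeasurable (Function.uncurry fun x y => f (x + y) - f x) :=
    (hfm.comp_measurable measurable_add).sub (hfm.comp_measurable measurable_fst)
  rw [eLpNorm_sub_comm]
  calc eLpNorm (translationMean ν f - f) p μ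
      = eLpNorm (fun x => ∫ y, f (x + y) - f x ∂ν) p μ := by congr! 1; exact funext hmean
    _ ≤ C := eLpNorm_integral_le_of_forall_eLpNorm_le hp1 hp hjoint.aestronglyMeasurable hC

lemma eLpNorm_sub_indicator_translationMean_comp_le [CompleteSpace E] [SFinite μ] (hp1 : 1 ≤ p)
    (hp : p ≠ ∞) (hc : c ≠ ∞) (hν : ν ≤ c • μ) (hfm : StronglyMeasurable f) (hf : MemLp f p μ)
    {K : Set G} (hK : MeasurableSet K) (π : SimpleFunc G G) {C κ : ℝ≥0∞}
    (hC : ∀ᵐ y ∂ν, eLpNorm (fun x => f (x + y) - f x) p μ ≤ C)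
    (hκ : ∀ x ∈ K, eLpNorm (fun z => f (z + (x - π x)) - f z) p μ ≤ κ) :
    eLpNorm (f - K.indicator (translationMean ν f ∘ π)) p μ ≤
      eLpNorm f p (μ.restrict Kᶜ) + (C + κ * (c ^ (1 / p).toReal * μ K ^ p.toReal⁻¹)) := by
  have hA := stronglyMeasurable_translationMean (ν := ν) hfm
  have hAπ : StronglyMeasurable (translationMean ν f ∘ π) :=
    (π.map (translationMean ν f)).stronglyMeasurable
  have hdisc : eLpNorm (translationMean ν f - translationMean ν f ∘ π) p (μ.restrict K) ≤
      κ * (c ^ (1 / p).toReal * μ K ^ p.toReal⁻¹) := by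
    rw [← mul_assoc, mul_comm κ, ← Measure.restrict_apply_univ K]
    refine eLpNorm_le_of_ae_enorm_bound ((ae_restrict_iff' hK).2 (.of_forall fun x hx => ?_))
    exact (enorm_translationMean_sub_le hp1 hp hc hν hf x (π x)).trans
      (by gcongr; exact hκ x hx)
  calc eLpNorm (f - K.indicator (translationMean ν f ∘ π)) p μ
      ≤ eLpNorm f p (μ.restrict Kᶜ) + eLpNorm (f - translationMean ν f ∘ π) p (μ.restrict K) :=
        eLpNorm_sub_indicator_le hp1 hK hf.1 hAπ.aestronglyMeasurable
    _ ≤ eLpNorm f p (μ.restrict Kᶜ) + (eLpNorm (f - translationMean ν f) p (μ.restrict K) +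
        eLpNorm (translationMean ν f - translationMean ν f ∘ π) p (μ.restrict K)) := by
      gcongr
      rw [← sub_add_sub_cancel f (translationMean ν f)]
      exact eLpNorm_add_le (hfm.sub hA).aestronglyMeasurable (hA.sub hAπ).aestronglyMeasurable hp1
    _ ≤ eLpNorm f p (μ.restrict Kᶜ) + (C + κ * (c ^ (1 / p).toReal * μ K ^ p.toReal⁻¹)) := by
      gcongr
      exact (eLpNorm_restrict_le _ _ _ _).trans
        (eLpNorm_sub_translationMean_le hp1 hp hc hν hfm hf hC)

end TranslationMean

section KolmogorovRiesz

open Filter Topology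
open scoped ENNReal NNReal

variable {G E : Type*} [NormedAddCommGroup G] [MeasurableSpace G]
  {μ : Measure G} [NormedAddCommGroup E] {p : ℝ≥0∞}

/-- The elements of `F` have uniformly small `L^p` norm outside large balls. -/
def IsEquitight (F : Set (Lp E p μ)) : Prop :=
  ∀ ε > 0, ∃ R > 0, ∀ f ∈ F, eLpNorm f p (μ.restrict {x | R < ‖x‖}) < ENNReal.ofReal ε

/-- The elements of `F` are uniformly continuous in `L^p` mean, uniformly over `F`. -/
def IsEquicontinuousInMean (F : Set (Lp E p μ)) : Prop :=
  ∀ ε > 0, ∃ δ > 0, ∀ f ∈ F, ∀ y, ‖y‖ < δ →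
    eLpNorm (fun x => f (x + y) - f x) p μ < ENNReal.ofReal ε

lemma isEquitight_iff_integral_lt {p : ℝ} (hp : 0 < p) {F : Set (Lp E (ENNReal.ofReal p) μ)} :
    IsEquitight F ↔
      ∀ ε > 0, ∃ R > 0, ∀ f ∈ F, (∫ x in {x | R < ‖x‖}, ‖f x‖ ^ p ∂μ) < ε ^ p :=
  forall₂_congr fun _ hε => exists_congr fun _ => and_congr_right fun _ => forall₂_congr fun f _ =>
    (integral_rpow_norm_lt_rpow_iff hp hε ((Lp.memLp f).restrict _)).symm

variable [BorelSpace G]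

lemma isEquitight_of_totallyBounded [Fact (1 ≤ p)] (hp : p ≠ ∞) {F : Set (Lp E p μ)}
    (hF : TotallyBounded F) : IsEquitight F := by
  intro ε hε
  have htail (R : ℝ) (f g : Lp E p μ) : eLpNorm f p (μ.restrict {x | R < ‖x‖}) ≤
      eLpNorm g p (μ.restrict {x | R < ‖x‖}) + 1 * edist f g := by
    have hf := ((Lp.memLp f).restrict {x | R < ‖x‖}).1
    have hg := ((Lp.memLp g).restrict {x | R < ‖x‖}).1
    calc eLpNorm f p (μ.restrict {x | R < ‖x‖})
        = eLpNorm (g + (f - g) : G → E) p (μ.restrict {x | R < ‖x‖}) := by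
          rw [add_sub_cancel]
      _ ≤ eLpNorm g p (μ.restrict {x | R < ‖x‖}) +
          eLpNorm (f - g : G → E) p (μ.restrict {x | R < ‖x‖}) :=
          eLpNorm_add_le hg (hf.sub hg) Fact.out
      _ ≤ eLpNorm g p (μ.restrict {x | R < ‖x‖}) + 1 * edist f g := by
          rw [one_mul, Lp.edist_def]
          exact add_le_add_right (eLpNorm_restrict_le _ _ _ _) _
  obtain ⟨R, hR, hR0⟩ := ((eventually_forall_lt_of_totallyBounded ENNReal.one_ne_top htail
    (fun f => tendsto_eLpNorm_restrict_norm_gt hp (Lp.memLp f)) hF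
    (ENNReal.ofReal_pos.2 hε)).and (eventually_gt_atTop 0)).exists
  exact ⟨R, hR0, hR⟩

lemma isEquicontinuousInMean_iff_integral_lt [μ.IsAddLeftInvariant] {p : ℝ} (hp : 0 < p)
    {F : Set (Lp E (ENNReal.ofReal p) μ)} :
    IsEquicontinuousInMean F ↔
      ∀ ε > 0, ∃ δ > 0, ∀ f ∈ F, ∀ y, ‖y‖ < δ → (∫ x, ‖f (x + y) - f x‖ ^ p ∂μ) < ε ^ p :=
  forall₂_congr fun _ hε => exists_congr fun _ => and_congr_right fun _ => forall₂_congr fun f _ =>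
    forall₂_congr fun y _ => (integral_rpow_norm_lt_rpow_iff hp hε
      (((Lp.memLp f).comp_measurePreserving (measurePreserving_add_right μ y)).sub
        (Lp.memLp f))).symm

lemma edist_mk_vadd_Lp_self [μ.IsAddLeftInvariant] (f : Lp E p μ) (y : G) :
    edist (DomAddAct.mk y +ᵥ f) f = eLpNorm (fun x => f (x + y) - f x) p μ := by
  rw [Lp.edist_def]
  refine eLpNorm_congr_ae ?_
  filter_upwards [DomAddAct.vadd_Lp_ae_eq (DomAddAct.mk y) f] with x hx
  rw [Pi.sub_apply, hx, Equiv.symm_apply_apply, vadd_eq_add, add_comm]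

lemma isEquicontinuousInMean_of_totallyBounded [ProperSpace G] [μ.IsAddHaarMeasure] [Fact (1 ≤ p)]
    (hp : p ≠ ∞) {F : Set (Lp E p μ)} (hF : TotallyBounded F) : IsEquicontinuousInMean F := by
  intro ε hε
  have : Fact (p ≠ ∞) := ⟨hp⟩
  have hmove (y : G) (f g : Lp E p μ) : edist (DomAddAct.mk y +ᵥ f) f ≤
      edist (DomAddAct.mk y +ᵥ g) g + 2 * edist f g := by
    calc edist (DomAddAct.mk y +ᵥ f) f
        ≤ edist (DomAddAct.mk y +ᵥ f) (DomAddAct.mk y +ᵥ g) + edist (DomAddAct.mk y +ᵥ g) g +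
          edist g f := edist_triangle4 _ _ _ _
      _ = edist (DomAddAct.mk y +ᵥ g) g + 2 * edist f g := by
        rw [edist_vadd_left, edist_comm g f]
        ring
  have hlim (f : Lp E p μ) :
      Tendsto (fun y : G => edist (DomAddAct.mk y +ᵥ f) f) (𝓝 0) (𝓝 0) := by
    have hcont : Continuous fun y : G => edist (DomAddAct.mk y +ᵥ f) f := by
      have := DomAddAct.continuous_mk (M := G)
      fun_prop
    simpa using hcont.tendsto 0
  obtain ⟨δ, hδ, h⟩ := Metric.eventually_nhds_iff.1 (eventually_forall_lt_of_totallyBounded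
    ENNReal.ofNat_ne_top hmove hlim hF (ENNReal.ofReal_pos.2 hε))
  refine ⟨δ, hδ, fun f hf y hy => ?_⟩
  rw [← edist_mk_vadd_Lp_self]
  exact h (by rwa [dist_zero_right]) f hf

lemma exists_isProbabilityMeasure_le_smul [ProperSpace G] [μ.IsOpenPosMeasure]
    [IsFiniteMeasureOnCompacts μ] {r : ℝ} (hr : 0 < r) :
    ∃ ν : Measure G, IsProbabilityMeasure ν ∧ (∃ c ≠ ∞, ν ≤ c • μ) ∧ ∀ᵐ y ∂ν, ‖y‖ < r := by
  have hball : μ (Metric.ball 0 r) ≠ 0 := (Metric.measure_ball_pos μ 0 hr).ne'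
  refine ⟨ProbabilityTheory.cond μ (Metric.ball 0 r),
    ProbabilityTheory.cond_isProbabilityMeasure_of_finite hball measure_ball_lt_top.ne,
    ⟨(μ (Metric.ball 0 r))⁻¹, ENNReal.inv_ne_top.2 hball, ?_⟩, ?_⟩
  · rw [ProbabilityTheory.cond]
    gcongr
    exact Measure.restrict_le_self
  · filter_upwards [ProbabilityTheory.ae_cond_mem measurableSet_ball] with y hy
    exact mem_ball_zero_iff.1 hy

variable [NormedSpace ℝ E] [FiniteDimensional ℝ E] [ProperSpace G] [μ.IsAddHaarMeasure]
  [Fact (1 ≤ p)] {F : Set (Lp E p μ)}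

lemma exists_finiteDimensional_approx (hp : p ≠ ∞) (htight : IsEquitight F)
    (hcont : IsEquicontinuousInMean F) {ε : ℝ} (hε : 0 < ε) :
    ∃ W : Submodule ℝ (Lp E p μ), FiniteDimensional ℝ W ∧ ∀ f ∈ F, ∃ w ∈ W, dist f w < ε := by
  have hε3 : 0 < ε / 3 := by positivity
  have hp1 : 1 ≤ p := Fact.out
  have := FiniteDimensional.complete ℝ E
  obtain ⟨R, -, hR⟩ := htight (ε / 3) hε3
  obtain ⟨r, hr, hmean⟩ := hcont (ε / 3) hε3
  obtain ⟨ν, _, ⟨c, hc, hν⟩, hνr⟩ := exists_isProbabilityMeasure_le_smul (μ := μ) hr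
  set K : Set G := Metric.closedBall 0 R
  have hK : MeasurableSet K := measurableSet_closedBall
  have hμK : μ K ≠ ∞ := measure_closedBall_lt_top.ne
  have hKc : Kᶜ = {x | R < ‖x‖} := by ext x; simp [K]
  have hcoef : c ^ (1 / p).toReal * μ K ^ p.toReal⁻¹ ≠ ∞ :=
    ENNReal.mul_ne_top (ENNReal.rpow_ne_top_of_nonneg ENNReal.toReal_nonneg hc)
      (ENNReal.rpow_ne_top_of_nonneg (by positivity) hμK)
  obtain ⟨κ, hκ, hκ_lt⟩ :=
    ENNReal.exists_nnreal_pos_mul_lt hcoef (ENNReal.ofReal_pos.2 hε3).ne'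
  obtain ⟨δ, hδ, hmod⟩ := hcont κ hκ
  obtain ⟨π, hπ⟩ := exists_simpleFunc_dist_lt_of_isCompact (isCompact_closedBall (0 : G) R) hδ
  obtain ⟨W, hWfin, hW⟩ := exists_finiteDimensional_indicator_comp_mem (𝕜 := ℝ) (E := E) p π hK hμK
  refine ⟨W, hWfin, fun f hf => ⟨_, hW (translationMean ν f), ?_⟩⟩
  rw [← edist_lt_ofReal, Lp.edist_def, eLpNorm_congr_ae (ae_eq_rfl.sub (MemLp.coeFn_toLp _))]
  calc eLpNorm ((f : G → E) - K.indicator (translationMean ν f ∘ π)) p μ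
      ≤ eLpNorm f p (μ.restrict Kᶜ) +
        (ENNReal.ofReal (ε / 3) + κ * (c ^ (1 / p).toReal * μ K ^ p.toReal⁻¹)) := by
          refine eLpNorm_sub_indicator_translationMean_comp_le hp1 hp hc hν
            (Lp.stronglyMeasurable f) (Lp.memLp f) hK π
            (hνr.mono fun y hy => (hmean f hf y hy).le) fun x hx => ?_
          rw [← ENNReal.ofReal_coe_nnreal]
          exact (hmod f hf _ (by rw [← dist_eq_norm, dist_comm]; exact hπ x hx)).le
    _ < ENNReal.ofReal (ε / 3) + (ENNReal.ofReal (ε / 3) + ENNReal.ofReal (ε / 3)) := by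
      rw [hKc]
      exact ENNReal.add_lt_add (hR f hf) (ENNReal.add_lt_add_left ENNReal.ofReal_ne_top hκ_lt)
    _ = ENNReal.ofReal ε := by
      rw [← ENNReal.ofReal_add hε3.le hε3.le, ← ENNReal.ofReal_add hε3.le (by positivity)]
      congr 1
      ring

theorem kolmogorov_riesz_general (hp : p ≠ ∞) :
    TotallyBounded F ↔ Bornology.IsBounded F ∧ IsEquitight F ∧ IsEquicontinuousInMean F := by
  refine ⟨fun hF => ⟨hF.isBounded, isEquitight_of_totallyBounded hp hF,
    isEquicontinuousInMean_of_totallyBounded hp hF⟩, fun ⟨hbdd, htight, hcont⟩ => ?_⟩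
  exact totallyBounded_of_approx_finiteDimensional ℝ hbdd fun _ hε =>
    exists_finiteDimensional_approx hp htight hcont hε

end KolmogorovRiesz

/-- **Kolmogorov–Riesz theorem.** For `p ∈ [1,∞)`, a subset
`F ⊂ L^p(ℝ^d)` is totally bounded if and only if (i) `F` is bounded, (ii) the `p`-mass of
its elements outside large balls is uniformly small, and (iii) the `L^p` modulus of
continuity under translations is uniform over `F`. -/
theorem kolmogorov_riesz {d : ℕ} (p : ℝ) (hp : 1 ≤ p)
    [Fact (1 ≤ ENNReal.ofReal p)]
    (F : Set (Lp ℝ (ENNReal.ofReal p) (volume : Measure (EuclideanSpace ℝ (Fin d))))) :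
    TotallyBounded F ↔
      (Bornology.IsBounded F ∧
       (∀ ε > 0, ∃ R > 0, ∀ f ∈ F,
          (∫ x in {x : EuclideanSpace ℝ (Fin d) | R < ‖x‖},
            |(f : EuclideanSpace ℝ (Fin d) → ℝ) x| ^ p) < ε ^ p) ∧
       (∀ ε > 0, ∃ δ > 0, ∀ f ∈ F, ∀ y : EuclideanSpace ℝ (Fin d), ‖y‖ < δ →
          (∫ x, |(f : EuclideanSpace ℝ (Fin d) → ℝ) (x + y) -
                 (f : EuclideanSpace ℝ (Fin d) → ℝ) x| ^ p) < ε ^ p)) := by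
  have hp0 : 0 < p := zero_lt_one.trans_le hp
  simpa only [isEquitight_iff_integral_lt hp0, isEquicontinuousInMean_iff_integral_lt hp0,
    Real.norm_eq_abs] using kolmogorov_riesz_general (F := F) ENNReal.ofReal_ne_top
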